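/- There exists a real constant b > 0 such that for every ε with 0 < ε < 1/6 there is a constant K > 0 with |G(n) − b·n| ≤ K·n·exp(−√((1/6 − ε)·log n·log log n)) for all sufficiently large n. -/

import Mathlib

/-!
Fix `N` and forbid only the progressions whose ratio is below `N`. Progressions of larger ratio can
be destroyed by deleting the multiples of `r ^ 2`, `r ≥ N`, so this changes the maximum by at most
`n / (N - 1)` (`G_le_maxBelow`, `maxBelow_le_G_add`).

Every ratio `r < N` is `N`-smooth, so a progression stays in
one class `m * (N-smooth numbers)`, where `m` has no prime factor below `N`, and the optimum over
`{1, …, n}` is the sum over `m` of the optimum over the `N`-smooth numbers up to `n / m`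
(`maxBelow_Icc`). That optimum grows by `jump N s ∈ {0, 1}` at each smooth `s`, so the total is
`∑ s, jump N s * Φ (n / s)`, with `Φ x` the number of integers up to `x` free of prime factors below
`N` (`maxBelow_Icc_eq_sum_jump`). Legendre's sieve gives
`Φ x = x * ∏ (1 - 1 / p) + O (x ^ (1 - σ) * ∏ (1 + p ^ (σ - 1)))` for any `0 ≤ σ ≤ 1`
(`abs_card_sifted_sub_le`), and summing the errors over smooth `s` costs the Euler product
`∏ (1 - p ^ (σ - 1))⁻¹`. Hence the restricted maximum is `densityBelow N * n` up to
`n ^ (1 - σ) * errFactor N σ` (`abs_maxBelow_sub_le`).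

Letting `n → ∞` with `N` fixed shows that `G n / n` is Cauchy and that its limit `b` satisfies
`|b - densityBelow N| ≤ 1 / (N - 1)` (`exists_density`). Consequently
`|G n - b * n| ≤ 2 * n / (N - 1) + n ^ (1 - σ) * errFactor N σ`, and it remains to choose the
parameters. Write `M = √(c * log n * log log n)` with `c = 1 / 6 - ε`, take `N ≈ exp M` and
`σ = log log n / (5 * M)`. Then `n ^ (-σ) ≤ exp (-6 * M / 5)`, while `N ^ σ ≈ (log n) ^ (1 / 5)` and
the bound `∑ p < N, 1 / p ≪ log log n` (`sum_inv_primes_le`) give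
`log (errFactor N σ) ≪ (log n) ^ (1 / 5) * log log n`, which is at most `M / 5` for large `n`. So all
error terms are at most `n * exp (-M)`.
-/

/-- A finite set of positive integers is free of 3-term geometric progressions with
integral ratio if it contains no three elements `a, a*r, a*r^2` with `a ≥ 1`, `r ≥ 2`. -/
def GPFree (S : Finset ℕ) : Prop :=
  ¬ ∃ a r : ℕ, 0 < a ∧ 2 ≤ r ∧ a ∈ S ∧ a * r ∈ S ∧ a * r ^ 2 ∈ S

/-- `G n` is the maximum size of a geometric-progression-free subset of `{1, 2, …, n}`. -/
noncomputable def G (n : ℕ) : ℕ :=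
  sSup {k : ℕ | ∃ S : Finset ℕ, S ⊆ Finset.Icc 1 n ∧ GPFree S ∧ S.card = k}

/-! ### Progressions with bounded ratio -/

/-- `S` contains no progression `a, a * r, a * r ^ 2` with ratio `2 ≤ r < N`. -/
def GPFreeBelow (N : ℕ) (S : Finset ℕ) : Prop :=
  ∀ a r : ℕ, 0 < a → 2 ≤ r → r < N → a ∈ S → a * r ∈ S → a * r ^ 2 ∈ S → False

open Classical in
/-- The maximum size of a subset of `V` without progressions of ratio `< N`. -/
noncomputable def maxBelow (N : ℕ) (V : Finset ℕ) : ℕ :=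
  (V.powerset.filter (GPFreeBelow N)).sup Finset.card

open Classical in
/-- The `N`-smooth numbers in `[1, x]`; here `N`-smooth means that all prime factors are `< N`. -/
noncomputable def smoothUpTo (N x : ℕ) : Finset ℕ :=
  (Finset.Icc 1 x).filter (· ∈ N.smoothNumbers)

/-- The integers in `[1, x]` not divisible by any element of `A`. -/
def siftedUpTo (A : Finset ℕ) (x : ℕ) : Finset ℕ :=
  (Finset.Icc 1 x).filter (fun m => ∀ p ∈ A, ¬ p ∣ m)

theorem GPFreeBelow.mono {N : ℕ} {S T : Finset ℕ} (h : GPFreeBelow N T) (hST : S ⊆ T) :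
    GPFreeBelow N S :=
  fun a r ha hr hN h1 h2 h3 => h a r ha hr hN (hST h1) (hST h2) (hST h3)

theorem card_le_maxBelow {N : ℕ} {S V : Finset ℕ} (hS : S ⊆ V) (h : GPFreeBelow N S) :
    S.card ≤ maxBelow N V := by
  classical
  exact Finset.le_sup (f := Finset.card) (by simp [hS, h])

theorem exists_card_eq_maxBelow (N : ℕ) (V : Finset ℕ) :
    ∃ S ⊆ V, GPFreeBelow N S ∧ S.card = maxBelow N V := by
  classical
  have hne : (V.powerset.filter (GPFreeBelow N)).Nonempty :=
    ⟨∅, by simp [GPFreeBelow]⟩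
  obtain ⟨S, hS, h⟩ := Finset.exists_mem_eq_sup _ hne Finset.card
  simp only [Finset.mem_filter, Finset.mem_powerset] at hS
  exact ⟨S, hS.1, hS.2, h.symm⟩

theorem maxBelow_mono (N : ℕ) {V W : Finset ℕ} (h : V ⊆ W) : maxBelow N V ≤ maxBelow N W := by
  obtain ⟨S, hS, hg, hc⟩ := exists_card_eq_maxBelow N V
  exact hc ▸ card_le_maxBelow (hS.trans h) hg

theorem maxBelow_insert_le (N x : ℕ) (V : Finset ℕ) :
    maxBelow N (insert x V) ≤ maxBelow N V + 1 := by
  obtain ⟨S, hS, hg, hc⟩ := exists_card_eq_maxBelow N (insert x V)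
  have h1 : (S.erase x).card ≤ maxBelow N V :=
    card_le_maxBelow (by rwa [← Finset.subset_insert_iff])
      (hg.mono (Finset.erase_subset _ _))
  have := Finset.pred_card_le_card_erase (s := S) (a := x)
  omega

theorem smooth_of_lt {N r : ℕ} (hr : 0 < r) (h : r < N) : r ∈ N.smoothNumbers :=
  Nat.mem_smoothNumbers_of_lt hr h

theorem coprime_of_rough_smooth {N m s : ℕ} (hm : ∀ p ∈ N.primesBelow, ¬ p ∣ m)
    (hs : s ∈ N.smoothNumbers) : Nat.Coprime m s := by
  refine Nat.coprime_of_dvd fun p hp hpm hps => ?_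
  exact hm p (Nat.mem_primesBelow.2 ⟨Nat.mem_smoothNumbers'.1 hs p hp hps, hp⟩) hpm

/-- Uniqueness of the factorization into a rough and a smooth part. -/
theorem rough_smooth_unique {N m m' s s' : ℕ} (hm : ∀ p ∈ N.primesBelow, ¬ p ∣ m)
    (hm' : ∀ p ∈ N.primesBelow, ¬ p ∣ m') (hs : s ∈ N.smoothNumbers)
    (hs' : s' ∈ N.smoothNumbers) (h : m * s = m' * s') : m = m' ∧ s = s' := by
  have h1 : m ∣ m' := (coprime_of_rough_smooth hm hs').dvd_of_dvd_mul_right (h ▸ dvd_mul_right _ _)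
  have h2 : m' ∣ m := (coprime_of_rough_smooth hm' hs).dvd_of_dvd_mul_right (h ▸ dvd_mul_right _ _)
  have h3 : s ∣ s' :=
    (coprime_of_rough_smooth hm' hs).symm.dvd_of_dvd_mul_left (h ▸ dvd_mul_left _ _)
  have h4 : s' ∣ s :=
    (coprime_of_rough_smooth hm hs').symm.dvd_of_dvd_mul_left (h ▸ dvd_mul_left _ _)
  exact ⟨Nat.dvd_antisymm h1 h2, Nat.dvd_antisymm h3 h4⟩

theorem exists_rough_smooth (N : ℕ) {k : ℕ} (hk : 0 < k) :
    ∃ m s : ℕ, (∀ p ∈ N.primesBelow, ¬ p ∣ m) ∧ s ∈ N.smoothNumbers ∧ k = m * s := by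
  induction k using Nat.strong_induction_on with
  | _ k ih =>
    by_cases h : ∀ p ∈ N.primesBelow, ¬ p ∣ k
    · exact ⟨k, 1, h, by simp [Nat.mem_smoothNumbers], by simp⟩
    · push Not at h
      obtain ⟨p, hp, j, rfl⟩ := h
      have hpp := Nat.prime_of_mem_primesBelow hp
      have hj : 0 < j := Nat.pos_of_mul_pos_left hk
      obtain ⟨m, s, hm, hs, rfl⟩ := ih j (lt_mul_left hj hpp.one_lt) hj
      exact ⟨m, p * s, hm, Nat.mul_mem_smoothNumbers
        (smooth_of_lt hpp.pos (Nat.lt_of_mem_primesBelow hp)) hs, by ring⟩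

/-- As every ratio `r < N` is `N`-smooth, a progression of ratio `< N` stays inside a single class
`m * (N-smooth numbers)` with `m` free of prime factors below `N`, so the classes can be optimized
independently. -/
theorem maxBelow_Icc (N n : ℕ) :
    maxBelow N (Finset.Icc 1 n) =
      ∑ m ∈ siftedUpTo N.primesBelow n, maxBelow N (smoothUpTo N (n / m)) := by
  classical
  apply le_antisymm
  · obtain ⟨S, hS, hg, hc⟩ := exists_card_eq_maxBelow N (Finset.Icc 1 n)
    rw [← hc]
    have hsub : S ⊆ (siftedUpTo N.primesBelow n).biUnion
        (fun m => ((smoothUpTo N (n / m)).filter (fun s => m * s ∈ S)).image (fun s => m * s)) := by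
      intro k hk
      have hkn := Finset.mem_Icc.1 (hS hk)
      obtain ⟨m, s, hm, hs, rfl⟩ := exists_rough_smooth N hkn.1
      have hmp : 0 < m := Nat.pos_of_mul_pos_right hkn.1
      have hsp : 0 < s := Nat.pos_of_mul_pos_left hkn.1
      simp only [Finset.mem_biUnion, Finset.mem_image, Finset.mem_filter, siftedUpTo, smoothUpTo,
        Finset.mem_Icc]
      refine ⟨m, ⟨⟨hmp, (Nat.le_mul_of_pos_right m hsp).trans hkn.2⟩, hm⟩, s,
        ⟨⟨⟨hsp, ?_⟩, hs⟩, hk⟩, rfl⟩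
      rw [Nat.le_div_iff_mul_le hmp, mul_comm]
      exact hkn.2
    refine (Finset.card_le_card hsub).trans (Finset.card_biUnion_le.trans ?_)
    refine Finset.sum_le_sum fun m hm => Finset.card_image_le.trans ?_
    refine card_le_maxBelow (Finset.filter_subset _ _) ?_
    have hm0 : 0 < m := by
      simp only [siftedUpTo, Finset.mem_filter, Finset.mem_Icc] at hm
      omega
    intro a r ha hr hrN h1 h2 h3
    simp only [Finset.mem_filter] at h1 h2 h3
    exact hg (m * a) r (by positivity) hr hrN h1.2 (by rw [mul_assoc]; exact h2.2)
      (by rw [mul_assoc]; exact h3.2)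
  · choose T hT hg hc using fun m => exists_card_eq_maxBelow N (smoothUpTo N (n / m))
    have key : ∀ {m k}, m ∈ siftedUpTo N.primesBelow n → k ∈ T m →
        (0 < m ∧ ∀ p ∈ N.primesBelow, ¬ p ∣ m) ∧ k ∈ N.smoothNumbers ∧ 0 < k ∧ m * k ≤ n := by
      intro m k hm hk
      have hk' := hT m hk
      simp only [siftedUpTo, smoothUpTo, Finset.mem_filter, Finset.mem_Icc] at hm hk'
      refine ⟨⟨hm.1.1, hm.2⟩, hk'.2, hk'.1.1, ?_⟩
      have := hk'.1.2
      rwa [Nat.le_div_iff_mul_le hm.1.1, mul_comm] at this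
    have hcard : ((siftedUpTo N.primesBelow n).biUnion
        (fun m => (T m).image (fun s => m * s))).card =
        ∑ m ∈ siftedUpTo N.primesBelow n, maxBelow N (smoothUpTo N (n / m)) := by
      rw [Finset.card_biUnion]
      · refine Finset.sum_congr rfl fun m hm => ?_
        rw [← hc, Finset.card_image_of_injOn]
        intro s hs s' _ h
        exact Nat.eq_of_mul_eq_mul_left (key hm hs).1.1 h
      · intro m hm m' hm' hne
        rw [Function.onFun, Finset.disjoint_left]
        intro k hk hk'
        simp only [Finset.mem_image] at hk hk'
        obtain ⟨s, hs, rfl⟩ := hk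
        obtain ⟨s', hs', h⟩ := hk'
        exact hne (rough_smooth_unique (key hm hs).1.2 (key hm' hs').1.2 (key hm hs).2.1
          (key hm' hs').2.1 h.symm).1
    rw [← hcard]
    apply card_le_maxBelow
    · intro k hk
      simp only [Finset.mem_biUnion, Finset.mem_image] at hk
      obtain ⟨m, hm, s, hs, rfl⟩ := hk
      have := key hm hs
      exact Finset.mem_Icc.2 ⟨Nat.mul_pos this.1.1 this.2.2.1, this.2.2.2⟩
    · intro a r ha hr hrN h1 h2 h3
      simp only [Finset.mem_biUnion, Finset.mem_image] at h1 h2 h3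
      obtain ⟨m, hm, s, hs, rfl⟩ := h1
      obtain ⟨m₁, hm₁, s₁, hs₁, e₁⟩ := h2
      obtain ⟨m₂, hm₂, s₂, hs₂, e₂⟩ := h3
      have hrs : r ∈ N.smoothNumbers := smooth_of_lt (by omega) hrN
      obtain ⟨rfl, rfl⟩ := rough_smooth_unique (key hm₁ hs₁).1.2 (key hm hs).1.2 (key hm₁ hs₁).2.1
        (Nat.mul_mem_smoothNumbers (key hm hs).2.1 hrs) (e₁.trans (mul_assoc _ _ _))
      obtain ⟨rfl, rfl⟩ := rough_smooth_unique (key hm₂ hs₂).1.2 (key hm hs).1.2 (key hm₂ hs₂).2.1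
        (Nat.mul_mem_smoothNumbers (key hm hs).2.1
          (by rw [pow_two]; exact Nat.mul_mem_smoothNumbers hrs hrs)) (e₂.trans (mul_assoc _ _ _))
      exact hg _ s r (key hm hs).2.2.1 hr hrN hs hs₁ hs₂

/-- The indicator (`0` or `1`) of whether the `N`-smooth optimum increases at `s`. -/
noncomputable def jump (N s : ℕ) : ℝ :=
  (maxBelow N (smoothUpTo N s) : ℝ) - maxBelow N (smoothUpTo N (s - 1))

theorem jump_nonneg (N s : ℕ) : 0 ≤ jump N s := by
  classical
  refine sub_nonneg.2 (Nat.cast_le.2 (maxBelow_mono N ?_))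
  exact Finset.filter_subset_filter _ (Finset.Icc_subset_Icc le_rfl (Nat.sub_le _ _))

theorem jump_le_one (N s : ℕ) : jump N s ≤ 1 := by
  classical
  have h : smoothUpTo N s ⊆ insert s (smoothUpTo N (s - 1)) := by
    intro k hk
    simp only [smoothUpTo, Finset.mem_filter, Finset.mem_Icc, Finset.mem_insert] at hk ⊢
    rcases eq_or_ne k s with h | h
    · exact Or.inl h
    · exact Or.inr ⟨by omega, hk.2⟩
  have h2 := (maxBelow_mono N h).trans (maxBelow_insert_le N s _)
  have h3 : (maxBelow N (smoothUpTo N s) : ℝ) ≤ maxBelow N (smoothUpTo N (s - 1)) + 1 := by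
    exact_mod_cast h2
  unfold jump
  linarith

theorem jump_eq_zero {N s : ℕ} (hs : s ∉ N.smoothNumbers) : jump N s = 0 := by
  classical
  have h : smoothUpTo N s = smoothUpTo N (s - 1) := by
    ext k
    simp only [smoothUpTo, Finset.mem_filter, Finset.mem_Icc]
    constructor
    · rintro ⟨h1, h2⟩
      have : k ≠ s := fun h => hs (h ▸ h2)
      exact ⟨by omega, h2⟩
    · rintro ⟨h1, h2⟩
      exact ⟨by omega, h2⟩
  simp [jump, h]

theorem sum_jump (N x : ℕ) :
    ∑ s ∈ Finset.Icc 1 x, jump N s = (maxBelow N (smoothUpTo N x) : ℝ) := by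
  induction x with
  | zero =>
    obtain ⟨S, hS, -, hc⟩ := exists_card_eq_maxBelow N (smoothUpTo N 0)
    have : S = ∅ := by simpa [smoothUpTo] using hS
    simp [← hc, this]
  | succ x ih =>
    rw [Finset.sum_Icc_succ_top (by omega), ih]
    simp [jump]

/-- Summation by parts: exchanging the sums over the rough part `m` and the smooth threshold `s`
leaves, for each `s`, the number of `m ≤ n / s` without prime factors below `N`. -/
theorem maxBelow_Icc_eq_sum_jump (N n : ℕ) :
    (maxBelow N (Finset.Icc 1 n) : ℝ) =
      ∑ s ∈ Finset.Icc 1 n, jump N s * (siftedUpTo N.primesBelow (n / s)).card := by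
  rw [maxBelow_Icc]
  push_cast
  simp_rw [← sum_jump]
  rw [Finset.sum_comm' (t' := Finset.Icc 1 n) (s' := fun s => siftedUpTo N.primesBelow (n / s))]
  · refine Finset.sum_congr rfl fun s _ => ?_
    rw [Finset.sum_const, nsmul_eq_mul, mul_comm]
  · intro m s
    simp only [siftedUpTo, Finset.mem_filter, Finset.mem_Icc]
    constructor
    · rintro ⟨⟨⟨h1, h2⟩, h3⟩, h4, h5⟩
      have h6 := (Nat.le_div_iff_mul_le h1).1 h5
      exact ⟨⟨⟨h1, (Nat.le_div_iff_mul_le h4).2 (by rwa [mul_comm])⟩, h3⟩, h4,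
        (Nat.le_mul_of_pos_right s h1).trans h6⟩
    · rintro ⟨⟨⟨h1, h2⟩, h3⟩, h4, h5⟩
      have h6 := (Nat.le_div_iff_mul_le h4).1 h2
      exact ⟨⟨⟨h1, (Nat.le_mul_of_pos_right m h4).trans h6⟩, h3⟩, h4,
        (Nat.le_div_iff_mul_le h1).2 (by rwa [mul_comm])⟩

/-! ### Comparison with the unrestricted problem -/

theorem maxSet_bddAbove (n : ℕ) :
    BddAbove {k : ℕ | ∃ S : Finset ℕ, S ⊆ Finset.Icc 1 n ∧ GPFree S ∧ S.card = k} := by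
  refine ⟨n, ?_⟩
  rintro k ⟨S, hS, -, rfl⟩
  simpa using Finset.card_le_card hS

theorem card_le_G {n : ℕ} {S : Finset ℕ} (hS : S ⊆ Finset.Icc 1 n) (h : GPFree S) :
    S.card ≤ G n :=
  le_csSup (maxSet_bddAbove n) ⟨S, hS, h, rfl⟩

theorem G_le_maxBelow (N n : ℕ) : G n ≤ maxBelow N (Finset.Icc 1 n) := by
  refine csSup_le ⟨0, ∅, by simp [GPFree]⟩ ?_
  rintro k ⟨S, hS, hg, rfl⟩
  exact card_le_maxBelow hS fun a r ha hr _ h1 h2 h3 => hg ⟨a, r, ha, hr, h1, h2, h3⟩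

/-- Deleting all multiples `a * r ^ 2 ≤ n` with `r ≥ N` destroys every progression of ratio `≥ N`
at the cost of at most `∑ r ≥ N, n / r ^ 2` elements. -/
theorem maxBelow_le_G_add {N : ℕ} (hN : 2 ≤ N) (n : ℕ) :
    (maxBelow N (Finset.Icc 1 n) : ℝ) ≤ G n + n / ((N : ℝ) - 1) := by
  classical
  obtain ⟨S, hS, hg, hc⟩ := exists_card_eq_maxBelow N (Finset.Icc 1 n)
  set R : Finset ℕ := (Finset.Icc N (max N n)).biUnion
    (fun r => (Finset.Icc 1 (n / r ^ 2)).image (fun a => a * r ^ 2)) with hR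
  have h1 : (S \ R).card ≤ G n := by
    refine card_le_G (Finset.sdiff_subset.trans hS) ?_
    rintro ⟨a, r, ha, hr, m1, m2, m3⟩
    simp only [Finset.mem_sdiff] at m1 m2 m3
    by_cases hrN : r < N
    · exact hg a r ha hr hrN m1.1 m2.1 m3.1
    · refine m3.2 ?_
      have hn := (Finset.mem_Icc.1 (hS m3.1)).2
      have hr2 : 0 < r ^ 2 := by positivity
      simp only [hR, Finset.mem_biUnion, Finset.mem_image, Finset.mem_Icc]
      refine ⟨r, ⟨by omega, le_max_of_le_right ?_⟩, a, ⟨ha, (Nat.le_div_iff_mul_le hr2).2 hn⟩, rfl⟩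
      nlinarith
  have h2 : (R.card : ℝ) ≤ n / ((N : ℝ) - 1) := by
    have hb : R.card ≤ ∑ r ∈ Finset.Icc N (max N n), n / r ^ 2 := by
      refine Finset.card_biUnion_le.trans (Finset.sum_le_sum fun r _ => ?_)
      exact Finset.card_image_le.trans (by simp)
    have hs : ∑ r ∈ Finset.Ioc (N - 1) (max N n), ((r : ℝ) ^ 2)⁻¹ ≤ ((N : ℝ) - 1)⁻¹ := by
      have := sum_Ioc_inv_sq_le_sub (α := ℝ) (k := N - 1) (n := max N n) (by omega)
        (by omega)
      refine this.trans ?_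
      rw [Nat.cast_sub (by omega)]
      simp
    have hI : Finset.Icc N (max N n) = Finset.Ioc (N - 1) (max N n) := by
      ext k
      simp only [Finset.mem_Icc, Finset.mem_Ioc]
      omega
    calc (R.card : ℝ) ≤ ∑ r ∈ Finset.Icc N (max N n), ((n / r ^ 2 : ℕ) : ℝ) := by exact_mod_cast hb
      _ ≤ ∑ r ∈ Finset.Icc N (max N n), (n : ℝ) * ((r : ℝ) ^ 2)⁻¹ := by
        refine Finset.sum_le_sum fun r _ => ?_
        refine Nat.cast_div_le.trans ?_
        simp [div_eq_mul_inv]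
      _ ≤ n / ((N : ℝ) - 1) := by
        rw [← Finset.mul_sum, hI, div_eq_mul_inv]
        exact mul_le_mul_of_nonneg_left hs (by positivity)
  have h3 : S.card ≤ (S \ R).card + R.card := by
    have := Finset.le_card_sdiff R S
    omega
  have h4 : (S.card : ℝ) ≤ (S \ R).card + R.card := by exact_mod_cast h3
  have h5 : ((S \ R).card : ℝ) ≤ G n := by exact_mod_cast h1
  rw [← hc]
  linarith

/-- The interval `(n / 4, n]` contains no progression, since `a * r ^ 2 ≥ 4 * a`. -/
theorem G_lower (n : ℕ) : (n : ℝ) / 2 ≤ G n := by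
  have h : (Finset.Ioc (n / 4) n).card ≤ G n := by
    refine card_le_G (fun k hk => ?_) ?_
    · simp only [Finset.mem_Ioc, Finset.mem_Icc] at *
      omega
    · rintro ⟨a, r, ha, hr, m1, -, m3⟩
      simp only [Finset.mem_Ioc] at m1 m3
      have h4 : 4 ≤ r ^ 2 := by nlinarith
      have : a * 4 ≤ a * r ^ 2 := Nat.mul_le_mul_left a h4
      omega
  rw [Nat.card_Ioc] at h
  have h2 : n ≤ 2 * G n := by omega
  have h3 : (n : ℝ) ≤ 2 * G n := by exact_mod_cast h2
  linarith

/-! ### Sieving and summation over smooth numbers -/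

/-- Legendre's sieve, run one prime at a time. Since `Φ_{A ∪ {p}}(x) = Φ_A(x) - Φ_A(x / p)`, the
bound `|⌊x⌋ - x| ≤ x ^ (1 - σ)` picks up a factor `1 + p ^ (σ - 1)` for each prime. -/
theorem abs_card_sifted_sub_le {σ : ℝ} (h0 : 0 ≤ σ) (h1 : σ ≤ 1) (A : Finset ℕ)
    (hA : ∀ p ∈ A, p.Prime) {x : ℝ} (hx : 0 < x) :
    |((siftedUpTo A ⌊x⌋₊).card : ℝ) - x * ∏ p ∈ A, (1 - (p : ℝ)⁻¹)| ≤
      x ^ (1 - σ) * ∏ p ∈ A, (1 + (p : ℝ) ^ (σ - 1)) := by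
  classical
  induction A using Finset.induction_on generalizing x with
  | empty =>
    have hc : (siftedUpTo ∅ ⌊x⌋₊).card = ⌊x⌋₊ := by simp [siftedUpTo]
    rw [hc]
    simp only [Finset.prod_empty, mul_one]
    have hfl := Nat.floor_le hx.le
    rw [abs_sub_comm, abs_of_nonneg (by linarith)]
    rcases lt_or_ge x 1 with hx1 | hx1
    · rw [Nat.floor_eq_zero.2 hx1]
      simp only [Nat.cast_zero, sub_zero]
      calc x = x ^ (1 : ℝ) := (Real.rpow_one x).symm
        _ ≤ x ^ (1 - σ) := Real.rpow_le_rpow_of_exponent_ge hx hx1.le (by linarith)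
    · have := Nat.lt_floor_add_one x
      exact (by linarith : x - ⌊x⌋₊ ≤ 1).trans (Real.one_le_rpow hx1 (by linarith))
  | insert p A hpA ih =>
    have hp := hA p (Finset.mem_insert_self _ _)
    have hA' : ∀ q ∈ A, q.Prime := fun q hq => hA q (Finset.mem_insert_of_mem hq)
    have hp0 : (0 : ℝ) < p := by exact_mod_cast hp.pos
    have hsplit : (siftedUpTo A ⌊x⌋₊).card =
        (siftedUpTo (insert p A) ⌊x⌋₊).card + (siftedUpTo A ⌊x / p⌋₊).card := by
      rw [Nat.floor_div_natCast]
      have him : (siftedUpTo A (⌊x⌋₊ / p)).card =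
          ((siftedUpTo A ⌊x⌋₊).filter (fun m => p ∣ m)).card := by
        rw [← Finset.card_image_of_injective _ (mul_right_injective₀ hp.ne_zero)]
        congr 1
        ext m
        simp only [siftedUpTo, Finset.mem_image, Finset.mem_filter, Finset.mem_Icc]
        constructor
        · rintro ⟨k, ⟨⟨hk1, hk2⟩, hk⟩, rfl⟩
          rw [Nat.le_div_iff_mul_le hp.pos] at hk2
          refine ⟨⟨⟨Nat.mul_pos hp.pos hk1, by rwa [mul_comm]⟩, fun q hq hd => ?_⟩, dvd_mul_right _ _⟩
          rcases (hA' q hq).dvd_mul.1 hd with h | h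
          · exact hpA (((Nat.prime_dvd_prime_iff_eq (hA' q hq) hp).1 h) ▸ hq)
          · exact hk q hq h
        · rintro ⟨⟨⟨hk1, hk2⟩, hk⟩, j, rfl⟩
          refine ⟨j, ⟨⟨Nat.pos_of_mul_pos_left hk1, ?_⟩, fun q hq hd => hk q hq (hd.mul_left _)⟩, rfl⟩
          rw [Nat.le_div_iff_mul_le hp.pos, mul_comm]
          exact hk2
      have hnot : siftedUpTo (insert p A) ⌊x⌋₊ = (siftedUpTo A ⌊x⌋₊).filter (fun m => ¬ p ∣ m) := by
        ext m
        simp only [siftedUpTo, Finset.mem_filter, Finset.mem_insert, forall_eq_or_imp]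
        tauto
      rw [him, hnot, add_comm]
      exact (Finset.card_filter_add_card_filter_not _).symm
    have e1 := ih hA' hx
    have e2 := ih hA' (div_pos hx hp0)
    have hsplit' : ((siftedUpTo A ⌊x⌋₊).card : ℝ) =
        (siftedUpTo (insert p A) ⌊x⌋₊).card + (siftedUpTo A ⌊x / p⌋₊).card := by
      exact_mod_cast hsplit
    rw [Finset.prod_insert hpA, Finset.prod_insert hpA]
    have hpow : (x / p) ^ (1 - σ) = x ^ (1 - σ) * (p : ℝ) ^ (σ - 1) := by
      rw [Real.div_rpow hx.le hp0.le, div_eq_mul_inv, ← Real.rpow_neg hp0.le, neg_sub]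
    rw [hpow] at e2
    set P := ∏ q ∈ A, (1 - (q : ℝ)⁻¹)
    set Q := ∏ q ∈ A, (1 + (q : ℝ) ^ (σ - 1))
    have : ((siftedUpTo (insert p A) ⌊x⌋₊).card : ℝ) - x * ((1 - (p : ℝ)⁻¹) * P) =
        ((siftedUpTo A ⌊x⌋₊).card - x * P) - ((siftedUpTo A ⌊x / p⌋₊).card - x / p * P) := by
      rw [hsplit', div_eq_mul_inv]
      ring
    rw [this]
    refine (abs_sub _ _).trans ((add_le_add e1 e2).trans (le_of_eq ?_))
    ring

/-- `k ↦ k ^ (σ - 1)` as a completely multiplicative function. -/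
noncomputable def rpowHom (σ : ℝ) : ℕ →* ℝ where
  toFun k := (k : ℝ) ^ (σ - 1)
  map_one' := by simp
  map_mul' a b := by rw [Nat.cast_mul, Real.mul_rpow (by positivity) (by positivity)]

theorem hasSum_smooth_rpow {σ : ℝ} (h1 : σ < 1) (N : ℕ) :
    HasSum (fun m : N.smoothNumbers => ((m : ℕ) : ℝ) ^ (σ - 1))
      (∏ p ∈ N.primesBelow, (1 - (p : ℝ) ^ (σ - 1))⁻¹) := by
  refine (EulerProduct.summable_and_hasSum_smoothNumbers_prod_primesBelow_geometric
    (f := rpowHom σ) (fun {p} hp => ?_) N).2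
  change ‖(p : ℝ) ^ (σ - 1)‖ < 1
  rw [Real.norm_of_nonneg (by positivity)]
  exact Real.rpow_lt_one_of_one_lt_of_neg (by exact_mod_cast hp.one_lt) (by linarith)

/-- The factor by which sieving and summation over smooth numbers inflate the error. -/
noncomputable def errFactor (N : ℕ) (σ : ℝ) : ℝ :=
  (∏ p ∈ N.primesBelow, (1 + (p : ℝ) ^ (σ - 1))) *
    ∏ p ∈ N.primesBelow, (1 - (p : ℝ) ^ (σ - 1))⁻¹

/-- The density of the optimum for the problem restricted to ratios `< N`. -/
noncomputable def densityBelow (N : ℕ) : ℝ :=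
  (∏ p ∈ N.primesBelow, (1 - (p : ℝ)⁻¹)) * ∑' s : ℕ, jump N s * (s : ℝ)⁻¹

/-- Each term of `maxBelow_Icc_eq_sum_jump` is compared with its sieve main term; the errors
`(n / s) ^ (1 - σ)` are summed over the `N`-smooth `s` by the Euler product. -/
theorem abs_maxBelow_sub_le {σ : ℝ} (h0 : 0 ≤ σ) (h1 : σ < 1) (N : ℕ) {n : ℕ} (hn : 0 < n) :
    |(maxBelow N (Finset.Icc 1 n) : ℝ) - densityBelow N * n| ≤
      (n : ℝ) ^ (1 - σ) * errFactor N σ := by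
  classical
  have hn0 : (0 : ℝ) < n := by exact_mod_cast hn
  set D := ∏ p ∈ N.primesBelow, (1 - (p : ℝ)⁻¹) with hD
  set Q := ∏ p ∈ N.primesBelow, (1 + (p : ℝ) ^ (σ - 1)) with hQ
  have hQ0 : 0 ≤ Q := Finset.prod_nonneg fun p _ => by positivity
  -- extend the smooth sums by zero to all of `ℕ`
  have hind : ∀ {τ : ℝ}, τ < 1 → HasSum
      (N.smoothNumbers.indicator (fun m : ℕ => (m : ℝ) ^ (τ - 1)))
      (∏ p ∈ N.primesBelow, (1 - (p : ℝ) ^ (τ - 1))⁻¹) := fun h =>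
    hasSum_subtype_iff_indicator.1 (hasSum_smooth_rpow h N)
  have hsumj : Summable (fun s : ℕ => jump N s * (s : ℝ)⁻¹) := by
    refine Summable.of_nonneg_of_le (fun s => mul_nonneg (jump_nonneg N s) (by positivity))
      (fun s => ?_) (hind zero_lt_one).summable
    by_cases hs : s ∈ N.smoothNumbers
    · rw [Set.indicator_of_mem hs, zero_sub, Real.rpow_neg_one]
      exact mul_le_of_le_one_left (by positivity) (jump_le_one N s)
    · rw [Set.indicator_of_notMem hs, jump_eq_zero hs, zero_mul]
  have hfin : HasSum (fun s : ℕ => jump N s * ((siftedUpTo N.primesBelow (n / s)).card : ℝ))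
      (maxBelow N (Finset.Icc 1 n) : ℝ) := by
    rw [maxBelow_Icc_eq_sum_jump]
    refine hasSum_sum_of_ne_finset_zero fun s hs => ?_
    have : n / s = 0 := by
      rw [Finset.mem_Icc] at hs
      rcases Nat.eq_zero_or_pos s with rfl | h
      · simp
      · exact Nat.div_eq_of_lt (by omega)
    simp [this, siftedUpTo]
  have hdiff := hfin.sub ((hsumj.hasSum.mul_left D).mul_right (n : ℝ))
  have hbound := ((hind h1).mul_left ((n : ℝ) ^ (1 - σ) * Q))
  have hle : ∀ s : ℕ, ‖jump N s * ((siftedUpTo N.primesBelow (n / s)).card : ℝ) -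
      D * (jump N s * (s : ℝ)⁻¹) * n‖ ≤ (n : ℝ) ^ (1 - σ) * Q *
        N.smoothNumbers.indicator (fun m : ℕ => (m : ℝ) ^ (σ - 1)) s := by
    intro s
    by_cases hs : s ∈ N.smoothNumbers
    · have hs0 : (0 : ℝ) < s := by
        exact_mod_cast Nat.pos_of_ne_zero (Nat.ne_zero_of_mem_smoothNumbers hs)
      have hL := abs_card_sifted_sub_le h0 h1.le N.primesBelow
        (fun p hp => Nat.prime_of_mem_primesBelow hp) (div_pos hn0 hs0)
      rw [Nat.floor_div_natCast, Nat.floor_natCast, Real.div_rpow hn0.le hs0.le, div_eq_mul_inv _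
        ((s : ℝ) ^ (1 - σ)), ← Real.rpow_neg hs0.le, neg_sub] at hL
      rw [Set.indicator_of_mem hs]
      have heq : jump N s * ((siftedUpTo N.primesBelow (n / s)).card : ℝ) -
          D * (jump N s * (s : ℝ)⁻¹) * n =
          jump N s * ((siftedUpTo N.primesBelow (n / s)).card - n / s * D) := by
        rw [div_eq_mul_inv]
        ring
      rw [heq, norm_mul, Real.norm_of_nonneg (jump_nonneg N s), Real.norm_eq_abs]
      refine (mul_le_of_le_one_left (abs_nonneg _) (jump_le_one N s)).trans (hL.trans (le_of_eq ?_))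
      ring
    · simp [jump_eq_zero hs, Set.indicator_of_notMem hs]
  have hfinal := hdiff.norm_le_of_bounded hbound hle
  rw [Real.norm_eq_abs] at hfinal
  unfold densityBelow errFactor
  refine hfinal.trans (le_of_eq ?_)
  ring

/-! ### Sums over primes -/

/-- Chebyshev's bound on one dyadic block: `θ(2 ^ (J + 1)) ≤ 2 ^ (J + 1) * log 4`, while each prime
of the block contributes at least `J * log 2` to `θ`. -/
theorem sum_inv_primes_dyadic {J : ℕ} (hJ : 0 < J) :
    ∑ p ∈ Nat.primesBelow (2 ^ (J + 1)) \ Nat.primesBelow (2 ^ J), (p : ℝ)⁻¹ ≤ 4 * (J : ℝ)⁻¹ := by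
  set B := Nat.primesBelow (2 ^ (J + 1)) \ Nat.primesBelow (2 ^ J) with hB
  have hmem : ∀ p ∈ B, p.Prime ∧ 2 ^ J ≤ p ∧ p < 2 ^ (J + 1) := by
    intro p hp
    simp only [hB, Finset.mem_sdiff, Nat.mem_primesBelow, not_and] at hp
    exact ⟨hp.1.2, not_lt.1 fun h => hp.2 h hp.1.2, hp.1.1⟩
  have hJ0 : (0 : ℝ) < J := by exact_mod_cast hJ
  have hl2 : 0 < Real.log 2 := Real.log_pos one_lt_two
  have hcount : (B.card : ℝ) * (J * Real.log 2) ≤ Real.log 4 * 2 ^ (J + 1) := by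
    calc (B.card : ℝ) * (J * Real.log 2) = ∑ p ∈ B, J * Real.log 2 := by simp
      _ ≤ ∑ p ∈ B, Real.log p := by
        refine Finset.sum_le_sum fun p hp => ?_
        rw [← Real.log_pow]
        exact Real.log_le_log (by positivity) (by exact_mod_cast (hmem p hp).2.1)
      _ ≤ Chebyshev.theta ((2 ^ (J + 1) : ℕ) : ℝ) := by
        rw [Chebyshev.theta_eq_sum_primesLE_log]
        refine Finset.sum_le_sum_of_subset_of_nonneg (fun p hp => ?_) fun p _ _ => Real.log_natCast_nonneg p
        exact Nat.mem_primesLE.2 ⟨(hmem p hp).2.2.le, (hmem p hp).1⟩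
      _ ≤ Real.log 4 * 2 ^ (J + 1) := by
        have := Chebyshev.theta_le_log4_mul_x (x := ((2 ^ (J + 1) : ℕ) : ℝ)) (by positivity)
        simpa using this
  have hl4 : Real.log 4 = 2 * Real.log 2 := by
    rw [show (4 : ℝ) = 2 ^ 2 by norm_num, Real.log_pow]
    norm_num
  have hcount' : (B.card : ℝ) * J ≤ 4 * 2 ^ J := by
    rw [hl4, pow_succ] at hcount
    have : ((B.card : ℝ) * J) * Real.log 2 ≤ (4 * 2 ^ J) * Real.log 2 := by linarith
    exact le_of_mul_le_mul_right this hl2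
  calc ∑ p ∈ B, (p : ℝ)⁻¹ ≤ ∑ p ∈ B, ((2 : ℝ) ^ J)⁻¹ := by
        refine Finset.sum_le_sum fun p hp => inv_anti₀ (by positivity) ?_
        exact_mod_cast (hmem p hp).2.1
    _ = B.card * ((2 : ℝ) ^ J)⁻¹ := by simp
    _ ≤ 4 * (J : ℝ)⁻¹ := by
        rw [← div_eq_mul_inv, ← div_eq_mul_inv, div_le_div_iff₀ (by positivity) hJ0]
        exact hcount'

theorem sum_inv_primes_two_pow (J : ℕ) :
    ∑ p ∈ Nat.primesBelow (2 ^ (J + 1)), (p : ℝ)⁻¹ ≤ 4 * (harmonic J : ℝ) := by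
  induction J with
  | zero => simp
  | succ J ih =>
    have hsub : Nat.primesBelow (2 ^ (J + 1)) ⊆ Nat.primesBelow (2 ^ (J + 1 + 1)) := by
      intro p hp
      rw [Nat.mem_primesBelow] at *
      exact ⟨hp.1.trans_le (Nat.pow_le_pow_right two_pos (Nat.le_succ _)), hp.2⟩
    rw [← Finset.sum_sdiff hsub, harmonic_succ]
    have := sum_inv_primes_dyadic (Nat.succ_pos J)
    push_cast at this ⊢
    linarith

/-- An upper bound of Mertens type. -/
theorem sum_inv_primes_le {N n : ℕ} (hn : 2 ≤ n) (hN : N ≤ n) :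
    ∑ p ∈ N.primesBelow, (p : ℝ)⁻¹ ≤ 4 * (2 + Real.log (Real.log n)) := by
  set J := Nat.log 2 n with hJ
  have hJ1 : 0 < J := Nat.log_pos one_lt_two hn
  have hJ0 : (0 : ℝ) < J := by exact_mod_cast hJ1
  have hsub : N.primesBelow ⊆ Nat.primesBelow (2 ^ (J + 1)) := by
    intro p hp
    rw [Nat.mem_primesBelow] at *
    exact ⟨hp.1.trans (hN.trans_lt (Nat.lt_pow_succ_log_self one_lt_two n)), hp.2⟩
  have h1 := (Finset.sum_le_sum_of_subset_of_nonneg (f := fun p : ℕ => (p : ℝ)⁻¹) hsub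
    fun p _ _ => by positivity).trans (sum_inv_primes_two_pow J)
  have h2 := harmonic_le_one_add_log J
  have hln : 0 < Real.log n := Real.log_pos (by exact_mod_cast hn)
  have h3 : (J : ℝ) ≤ 2 * Real.log n := by
    have h4 : (2 : ℝ) ^ J ≤ n := by exact_mod_cast Nat.pow_log_le_self 2 (by omega)
    have h5 := Real.log_le_log (by positivity) h4
    rw [Real.log_pow] at h5
    have := Real.log_two_gt_d9
    nlinarith
  have h6 : Real.log J ≤ 1 + Real.log (Real.log n) := by
    refine (Real.log_le_log hJ0 h3).trans ?_
    rw [Real.log_mul two_ne_zero hln.ne']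
    have := Real.log_two_lt_d9
    linarith
  linarith

/-- Each prime `p < N` contributes at most `exp (5 * p ^ (σ - 1))`, and `p ^ σ ≤ N ^ σ`. -/
theorem errFactor_le {N : ℕ} {σ : ℝ} (h0 : 0 ≤ σ) (h1 : σ ≤ 1 / 2) :
    errFactor N σ ≤ Real.exp (5 * ((N : ℝ) ^ σ * ∑ p ∈ N.primesBelow, (p : ℝ)⁻¹)) := by
  unfold errFactor
  rw [← Finset.prod_mul_distrib, Finset.mul_sum, Finset.mul_sum, Real.exp_sum]
  refine Finset.prod_le_prod (fun p hp => ?_) (fun p hp => ?_)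
  all_goals
    have hp2 : (2 : ℝ) ≤ p := by exact_mod_cast (Nat.prime_of_mem_primesBelow hp).two_le
    have hp0 : (0 : ℝ) < p := by linarith
    have hpN : (p : ℝ) ≤ N := by exact_mod_cast (Nat.lt_of_mem_primesBelow hp).le
    have hx0 : 0 < (p : ℝ) ^ (σ - 1) := by positivity
    have hx1 : (p : ℝ) ^ (σ - 1) ≤ 3 / 4 := by
      calc (p : ℝ) ^ (σ - 1) ≤ (p : ℝ) ^ (-(1 / 2) : ℝ) :=
            Real.rpow_le_rpow_of_exponent_le (by linarith) (by linarith)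
        _ = (Real.sqrt p)⁻¹ := by rw [Real.rpow_neg hp0.le, Real.sqrt_eq_rpow]
        _ ≤ (4 / 3)⁻¹ := by
            refine inv_anti₀ (by norm_num) (Real.le_sqrt_of_sq_le ?_)
            linarith
        _ = 3 / 4 := by norm_num
    have hx2 : (p : ℝ) ^ (σ - 1) ≤ (N : ℝ) ^ σ * (p : ℝ)⁻¹ := by
      rw [Real.rpow_sub_one hp0.ne', div_eq_mul_inv]
      exact mul_le_mul_of_nonneg_right (Real.rpow_le_rpow hp0.le hpN h0) (by positivity)
    generalize (p : ℝ) ^ (σ - 1) = x at hx0 hx1 hx2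
  · have : 0 < 1 - x := by linarith
    positivity
  · have e1 : 1 + x ≤ Real.exp x := by linarith [Real.add_one_le_exp x]
    have e2 : (1 - x)⁻¹ ≤ Real.exp (4 * x) := by
      have h4 : (1 - x)⁻¹ ≤ 4 * x + 1 := by
        rw [inv_le_iff_one_le_mul₀ (by linarith)]
        nlinarith
      exact h4.trans (Real.add_one_le_exp _)
    calc (1 + x) * (1 - x)⁻¹ ≤ Real.exp x * Real.exp (4 * x) :=
          mul_le_mul e1 e2 (inv_nonneg.2 (by linarith)) (Real.exp_pos _).le
      _ = Real.exp (5 * x) := by rw [← Real.exp_add]; ring_nf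
      _ ≤ _ := Real.exp_le_exp.2 (by linarith)

/-! ### The density and the error term -/

theorem abs_G_sub_densityBelow_le {σ : ℝ} (h0 : 0 ≤ σ) (h1 : σ < 1) {N : ℕ} (hN : 2 ≤ N) {n : ℕ}
    (hn : 0 < n) :
    |(G n : ℝ) - densityBelow N * n| ≤
      n * ((N : ℝ) - 1)⁻¹ + (n : ℝ) ^ (1 - σ) * errFactor N σ := by
  have e1 : (G n : ℝ) ≤ maxBelow N (Finset.Icc 1 n) := by exact_mod_cast G_le_maxBelow N n
  have e2 := maxBelow_le_G_add hN n
  have e3 := abs_le.1 (abs_maxBelow_sub_le h0 h1 N hn)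
  rw [div_eq_mul_inv] at e2
  have hN' : (2 : ℝ) ≤ N := by exact_mod_cast hN
  have : 0 ≤ (n : ℝ) * ((N : ℝ) - 1)⁻¹ := mul_nonneg (by positivity) (inv_nonneg.2 (by linarith))
  rw [abs_le]
  constructor <;> linarith [e3.1, e3.2]

open Filter Topology in
/-- `G n / n` is within `1 / (N - 1) + o(1)` of `densityBelow N` for each `N`, hence Cauchy. -/
theorem exists_density : ∃ b : ℝ, 0 < b ∧ ∀ N : ℕ, 2 ≤ N →
    |b - densityBelow N| ≤ ((N : ℝ) - 1)⁻¹ := by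
  have key : ∀ N : ℕ, 2 ≤ N → ∀ n : ℕ, 0 < n → |(G n : ℝ) / n - densityBelow N| ≤
      ((N : ℝ) - 1)⁻¹ + (n : ℝ) ^ (-(1 / 2) : ℝ) * errFactor N (1 / 2) := by
    intro N hN n hn
    have hn0 : (0 : ℝ) < n := by exact_mod_cast hn
    have h := abs_G_sub_densityBelow_le (σ := 1 / 2) (by norm_num) (by norm_num) hN hn
    have hp : (n : ℝ) ^ (1 - 1 / 2 : ℝ) = n * (n : ℝ) ^ (-(1 / 2) : ℝ) := by
      rw [sub_eq_add_neg, Real.rpow_add hn0, Real.rpow_one]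
    have he : (G n : ℝ) / n - densityBelow N = (G n - densityBelow N * n) / n := by
      field_simp
    rw [he, abs_div, abs_of_pos hn0, div_le_iff₀ hn0]
    refine h.trans (le_of_eq ?_)
    rw [hp]
    ring
  have hlim : ∀ N : ℕ, Tendsto (fun n : ℕ => (n : ℝ) ^ (-(1 / 2) : ℝ) * errFactor N (1 / 2))
      atTop (𝓝 0) := by
    intro N
    have := ((tendsto_rpow_neg_atTop (y := 1 / 2) (by norm_num)).comp
      tendsto_natCast_atTop_atTop).mul_const (errFactor N (1 / 2))
    simpa using this
  have hcau : CauchySeq (fun n : ℕ => (G n : ℝ) / n) := by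
    rw [Metric.cauchySeq_iff']
    intro ε hε
    obtain ⟨k, hk⟩ := exists_nat_gt (4 / ε)
    have hk0 : (0 : ℝ) < k := lt_trans (by positivity) hk
    have hk1 : (((k + 2 : ℕ) : ℝ) - 1)⁻¹ < ε / 4 := by
      rw [inv_lt_comm₀ (by push_cast; linarith) (by positivity), inv_div]
      push_cast
      linarith
    obtain ⟨n₀, hn₀⟩ := eventually_atTop.1
      (((hlim (k + 2)).eventually_lt_const (by positivity : (0 : ℝ) < ε / 4)).and
        (eventually_gt_atTop 0))
    refine ⟨n₀, fun n hn => ?_⟩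
    have a1 := key (k + 2) (by omega) n (hn₀ n hn).2
    have a2 := key (k + 2) (by omega) n₀ (hn₀ n₀ le_rfl).2
    have b1 := (hn₀ n hn).1
    have b2 := (hn₀ n₀ le_rfl).1
    rw [Real.dist_eq, abs_lt]
    rw [abs_le] at a1 a2
    constructor <;> linarith [a1.1, a1.2, a2.1, a2.2]
  obtain ⟨b, hb⟩ := cauchySeq_tendsto_of_complete hcau
  refine ⟨b, ?_, fun N hN => ?_⟩
  · have : (1 / 2 : ℝ) ≤ b := by
      refine ge_of_tendsto hb ((eventually_gt_atTop 0).mono fun n hn => ?_)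
      have hn0 : (0 : ℝ) < n := by exact_mod_cast hn
      rw [le_div_iff₀ hn0]
      linarith [G_lower n]
    linarith
  · have h1 := (hb.sub_const (densityBelow N)).abs
    have h2 := (hlim N).const_add (((N : ℝ) - 1)⁻¹)
    rw [add_zero] at h2
    exact le_of_tendsto_of_tendsto h1 h2 ((eventually_gt_atTop 0).mono fun n hn => key N hN n hn)

theorem gp_free_max_size_asymptotic :
    ∃ b : ℝ, 0 < b ∧
      ∀ ε : ℝ, 0 < ε → ε < 1 / 6 →
        ∃ K : ℝ, 0 < K ∧ ∃ N : ℕ, ∀ n : ℕ, N ≤ n →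
          |(G n : ℝ) - b * n| ≤
            K * n * Real.exp (-Real.sqrt ((1 / 6 - ε) * Real.log n * Real.log (Real.log n))) := by
  obtain ⟨b, hb, hbN⟩ := exists_density
  refine ⟨b, hb, fun ε hε hε' => ⟨3, by norm_num, ?_⟩⟩
  set c := 1 / 6 - ε with hc
  have hc0 : 0 < c := by linarith
  have hc1 : c ≤ 1 / 6 := by linarith
  have hev : ∀ᶠ n : ℕ in Filter.atTop,
      22500000 / c ≤ Real.log (Real.log n) ∧ 2 ≤ n :=
    ((Real.tendsto_log_atTop.comp (Real.tendsto_log_atTop.comp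
      tendsto_natCast_atTop_atTop)).eventually_ge_atTop _).and (Filter.eventually_ge_atTop 2)
  obtain ⟨n₀, hn₀⟩ := Filter.eventually_atTop.1 hev
  refine ⟨n₀, fun n hn => ?_⟩
  obtain ⟨hw, hn2⟩ := hn₀ n hn
  have hn0 : (0 : ℝ) < n := by exact_mod_cast (by omega : 0 < n)
  have hl0 : 0 < Real.log n := Real.log_pos (by exact_mod_cast hn2)
  have hmert := fun N hN => sum_inv_primes_le (N := N) hn2 hN
  have hexpl : Real.exp (Real.log n) = n := Real.exp_log hn0
  have hexpw : Real.exp (Real.log (Real.log n)) = Real.log n := Real.exp_log hl0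
  set l := Real.log n with hl
  set w := Real.log l with hwdef
  rw [div_le_iff₀ hc0] at hw
  have hw1 : 22500000 ≤ w := by nlinarith
  set M := Real.sqrt (c * l * w) with hM
  have hclw : 0 < c * l * w := by positivity
  have hM0 : 0 < M := Real.sqrt_pos.2 hclw
  have hMsq : M ^ 2 = c * l * w := Real.sq_sqrt hclw.le
  -- the right-hand side dominates the exponent in the bound for `errFactor N σ` below
  have hgrow : 300 * (Real.exp (w / 5) * (2 + w)) ≤ M := by
    refine Real.le_sqrt_of_sq_le ?_
    have h1 : (3 * w / 5) ^ 3 / 6 ≤ Real.exp (3 * w / 5) := by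
      have := Real.pow_div_factorial_le_exp (3 * w / 5) (by linarith) 3
      norm_num [Nat.factorial] at this ⊢
      linarith
    have h2 : Real.exp (w / 5) ^ 2 * Real.exp (3 * w / 5) = l := by
      rw [← hexpw, ← Real.exp_nat_mul, ← Real.exp_add]
      congr 1
      push_cast
      ring
    have h3 : 90000 * (2 + w) ^ 2 ≤ c * Real.exp (3 * w / 5) * w := by
      have h4 : c * ((3 * w / 5) ^ 3 / 6) ≤ c * Real.exp (3 * w / 5) :=
        mul_le_mul_of_nonneg_left h1 hc0.le
      have h5 : 810000 * w ^ 2 ≤ c * ((3 * w / 5) ^ 3 / 6) := by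
        have : 22500000 * w ^ 2 ≤ (w * c) * w ^ 2 :=
          mul_le_mul_of_nonneg_right hw (by positivity)
        nlinarith
      have h6 : c * Real.exp (3 * w / 5) ≤ c * Real.exp (3 * w / 5) * w :=
        le_mul_of_one_le_right (by positivity) (by linarith)
      nlinarith
    calc (300 * (Real.exp (w / 5) * (2 + w))) ^ 2
        = Real.exp (w / 5) ^ 2 * (90000 * (2 + w) ^ 2) := by ring
      _ ≤ Real.exp (w / 5) ^ 2 * (c * Real.exp (3 * w / 5) * w) :=
          mul_le_mul_of_nonneg_left h3 (by positivity)
      _ = c * l * w := by rw [← h2]; ring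
  have hMw : 300 * (2 + w) ≤ M := by
    have : 1 ≤ Real.exp (w / 5) := Real.one_le_exp (by linarith)
    nlinarith
  -- this `σ` gives `N ^ σ ≈ exp (M * σ) = (log n) ^ (1 / 5)`, while `n ^ (-σ) ≤ exp (-6 * M / 5)`
  -- because `c ≤ 1 / 6`; the spare factor `exp (-M / 5)` absorbs `errFactor N σ`
  set σ := w / (5 * M) with hσ
  have hσ0 : 0 ≤ σ := by positivity
  have hσ1 : σ ≤ 1 / 2 := by
    rw [hσ, div_le_iff₀ (by positivity)]
    linarith
  have hσM : M * σ = w / 5 := by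
    rw [hσ]
    field_simp
  have hσl : 6 / 5 * M ≤ l * σ := by
    rw [hσ, ← mul_div_assoc, le_div_iff₀ (by positivity)]
    have : 6 * (c * l * w) ≤ l * w := by
      have : 0 < l * w := by positivity
      nlinarith
    nlinarith
  -- ratios `≥ N` then cost at most `n * exp (-M)`
  set N := ⌈Real.exp M⌉₊ + 1 with hNdef
  have hN1 : Real.exp M ≤ (N : ℝ) - 1 := by
    rw [hNdef]
    push_cast
    linarith [Nat.le_ceil (Real.exp M)]
  have heM : 1 ≤ Real.exp M := Real.one_le_exp hM0.le
  have hN3 : (N : ℝ) ≤ 3 * Real.exp M := by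
    rw [hNdef]
    push_cast
    linarith [Nat.ceil_lt_add_one (Real.exp_pos M).le]
  have hN2 : 2 ≤ N := by
    have : (2 : ℝ) ≤ N := by linarith
    exact_mod_cast this
  have hNn : N ≤ n := by
    have hlw : w + 1 ≤ l := by
      rw [← hexpw]
      exact Real.add_one_le_exp w
    have hMl : M ≤ l / 2 := by
      have : M ^ 2 ≤ (l / 2) ^ 2 := by
        rw [hMsq]
        have h1 : l * w ≤ l * l := mul_le_mul_of_nonneg_left (by linarith) hl0.le
        have h2 : c * (l * w) ≤ 1 / 6 * (l * w) :=
          mul_le_mul_of_nonneg_right hc1 (by positivity)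
        nlinarith
      exact le_of_sq_le_sq this (by positivity)
    have h3 : (3 : ℝ) ≤ Real.exp 2 := by linarith [Real.add_one_le_exp (2 : ℝ)]
    have : (N : ℝ) ≤ n := by
      calc (N : ℝ) ≤ 3 * Real.exp M := hN3
        _ ≤ Real.exp 2 * Real.exp M := mul_le_mul_of_nonneg_right h3 (Real.exp_pos _).le
        _ = Real.exp (2 + M) := (Real.exp_add _ _).symm
        _ ≤ Real.exp l := Real.exp_le_exp.2 (by linarith)
        _ = n := hexpl
    exact_mod_cast this
  have hNσ : (N : ℝ) ^ σ ≤ 3 * Real.exp (w / 5) := by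
    calc (N : ℝ) ^ σ ≤ (3 * Real.exp M) ^ σ := Real.rpow_le_rpow (by positivity) hN3 hσ0
      _ = 3 ^ σ * Real.exp (w / 5) := by
        rw [Real.mul_rpow (by norm_num) (Real.exp_pos _).le, ← Real.exp_mul, hσM]
      _ ≤ 3 * Real.exp (w / 5) := by
        refine mul_le_mul_of_nonneg_right ?_ (Real.exp_pos _).le
        calc (3 : ℝ) ^ σ ≤ 3 ^ (1 : ℝ) :=
              Real.rpow_le_rpow_of_exponent_le (by norm_num) (by linarith)
          _ = 3 := Real.rpow_one 3
  have hE : errFactor N σ ≤ Real.exp (M / 5) := by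
    refine (errFactor_le hσ0 hσ1).trans (Real.exp_le_exp.2 ?_)
    have : (N : ℝ) ^ σ * ∑ p ∈ N.primesBelow, (p : ℝ)⁻¹ ≤
        3 * Real.exp (w / 5) * (4 * (2 + w)) :=
      mul_le_mul hNσ (hmert N hNn) (Finset.sum_nonneg fun p _ => by positivity) (by positivity)
    linarith
  have hpow : (n : ℝ) ^ (1 - σ) * errFactor N σ ≤ n * Real.exp (-M) := by
    have h1 : (n : ℝ) ^ (1 - σ) = n * Real.exp (-(l * σ)) := by
      rw [Real.rpow_def_of_pos hn0, ← hl, mul_sub, mul_one, sub_eq_add_neg, Real.exp_add, hexpl]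
    rw [h1, mul_assoc]
    refine mul_le_mul_of_nonneg_left ?_ hn0.le
    calc Real.exp (-(l * σ)) * errFactor N σ ≤ Real.exp (-(l * σ)) * Real.exp (M / 5) :=
          mul_le_mul_of_nonneg_left hE (Real.exp_pos _).le
      _ = Real.exp (-(l * σ) + M / 5) := (Real.exp_add _ _).symm
      _ ≤ Real.exp (-M) := Real.exp_le_exp.2 (by linarith)
  have hinv : (n : ℝ) * ((N : ℝ) - 1)⁻¹ ≤ n * Real.exp (-M) := by
    rw [Real.exp_neg]
    exact mul_le_mul_of_nonneg_left (inv_anti₀ (Real.exp_pos _) hN1) hn0.le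
  have hd : |densityBelow N * n - b * n| ≤ n * ((N : ℝ) - 1)⁻¹ := by
    rw [← sub_mul, abs_mul, abs_of_pos hn0, mul_comm, abs_sub_comm]
    exact mul_le_mul_of_nonneg_left (hbN N hN2) hn0.le
  have hG := abs_G_sub_densityBelow_le hσ0 (by linarith) hN2 (by omega : 0 < n)
  have := abs_sub_le (G n : ℝ) (densityBelow N * n) (b * n)
  linarith
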